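/- The multiplicative elementary basis of Baxter satisfies E_{J_0} · E_{J_1} = E_{J_0 / J_1}, where J_0 / J_1 = (T^0_L \ T^1_L, T^0_R / T^1_R) for J_0 = (T^0_L, T^0_R) and J_1 = (T^1_L, T^1_R); similarly H_{J_0} · H_{J_1} = H_{J_0 \ J_1}. -/

import Mathlib

open scoped Classical

/-- Baxter adjacency relations on words over the alphabet of natural numbers. -/
def BaxterAdj (w w' : List ℕ) : Prop :=
  (∃ (a b c d : ℕ) (u v : List ℕ), a ≤ b ∧ b < c ∧ c ≤ d ∧
      w = c :: (u ++ a :: d :: (v ++ [b])) ∧ w' = c :: (u ++ d :: a :: (v ++ [b]))) ∨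
  (∃ (a b c d : ℕ) (u v : List ℕ), a < b ∧ b ≤ c ∧ c < d ∧
      w = b :: (u ++ d :: a :: (v ++ [c])) ∧ w' = b :: (u ++ a :: d :: (v ++ [c])))

/-- One rewriting step: an adjacency applied inside a word (congruence context). -/
def BaxterStep (w w' : List ℕ) : Prop :=
  ∃ (p s u v : List ℕ), BaxterAdj u v ∧ w = p ++ u ++ s ∧ w' = p ++ v ++ s

/-- The Baxter congruence: the equivalence generated by the Baxter steps. -/
def BaxterEquiv : List ℕ → List ℕ → Prop := Relation.EqvGen BaxterStep

/-- Sylvester adjacency: a c u b ≡ c a u b when a ≤ b < c. -/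
def SylvAdj (w w' : List ℕ) : Prop :=
  ∃ (a b c : ℕ) (u : List ℕ), a ≤ b ∧ b < c ∧
    w = a :: c :: (u ++ [b]) ∧ w' = c :: a :: (u ++ [b])

def SylvStep (w w' : List ℕ) : Prop :=
  ∃ (p s u v : List ℕ), SylvAdj u v ∧ w = p ++ u ++ s ∧ w' = p ++ v ++ s

def SylvEquiv : List ℕ → List ℕ → Prop := Relation.EqvGen SylvStep

/-- #-sylvester adjacency: b u a c ≡ b u c a when a < b ≤ c. -/
def SylvHAdj (w w' : List ℕ) : Prop :=
  ∃ (a b c : ℕ) (u : List ℕ), a < b ∧ b ≤ c ∧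
    w = b :: (u ++ [a, c]) ∧ w' = b :: (u ++ [c, a])

def SylvHStep (w w' : List ℕ) : Prop :=
  ∃ (p s u v : List ℕ), SylvHAdj u v ∧ w = p ++ u ++ s ∧ w' = p ++ v ++ s

def SylvHEquiv : List ℕ → List ℕ → Prop := Relation.EqvGen SylvHStep

/-- The standardized word of `u`: position `i` receives the rank of the letter `u i`
(ties broken from left to right), ranks starting at `1`. -/
def std (u : List ℕ) : List ℕ :=
  (List.range u.length).map fun i =>
    ((List.range u.length).filter fun j =>
      decide (u.getD j 0 < u.getD i 0 ∨ (u.getD j 0 = u.getD i 0 ∧ j < i))).length + 1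

/-- The maximal letter of a word. -/
def wordMax (u : List ℕ) : ℕ := u.foldr max 0

/-- The Schützenberger transformation: reverse and complement each letter w.r.t. max + 1. -/
def schutz (u : List ℕ) : List ℕ := u.reverse.map fun x => wordMax u + 1 - x

/-- Labeled binary trees. -/
inductive BT where
  | leaf : BT
  | node : BT → ℕ → BT → BT
deriving DecidableEq

/-- Leaf insertion into a left binary search tree. -/
def leafInsL : BT → ℕ → BT
  | .leaf, a => .node .leaf a .leaf
  | .node l b r, a => if a < b then .node (leafInsL l a) b r else .node l b (leafInsL r a)

/-- Leaf insertion into a right binary search tree. -/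
def leafInsR : BT → ℕ → BT
  | .leaf, a => .node .leaf a .leaf
  | .node l b r, a => if a ≤ b then .node (leafInsR l a) b r else .node l b (leafInsR r a)

/-- The lower restricted tree `T_{≤ a}` of a right binary search tree. -/
def splitLE : BT → ℕ → BT
  | .leaf, _ => .leaf
  | .node l b r, a => if b ≤ a then .node l b (splitLE r a) else splitLE l a

/-- The higher restricted tree `T_{> a}` of a right binary search tree. -/
def splitGT : BT → ℕ → BT
  | .leaf, _ => .leaf
  | .node l b r, a => if b ≤ a then splitGT r a else .node (splitGT l a) b r

/-- Root insertion into a right binary search tree. -/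
def rootIns (t : BT) (a : ℕ) : BT := .node (splitLE t a) a (splitGT t a)

/-- The left tree of the P-symbol: leaf insertions from left to right. -/
def insL (u : List ℕ) : BT := u.foldl leafInsL .leaf

/-- The right tree of the P-symbol: root insertions from left to right. -/
def insR (u : List ℕ) : BT := u.foldl rootIns .leaf

/-- The P-symbol of a word. -/
def Psymb (u : List ℕ) : BT × BT := (insL u, insR u)

/-- Unlabeled binary trees. -/
inductive UBT where
  | leaf : UBT
  | node : UBT → UBT → UBT
deriving DecidableEq

/-- The shape of a labeled binary tree. -/
def shape : BT → UBT
  | .leaf => .leaf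
  | .node l _ r => .node (shape l) (shape r)

/-- The shape of the P-symbol of a word. -/
def Pshape (u : List ℕ) : UBT × UBT := (shape (insL u), shape (insR u))

/-- Number of internal nodes. -/
def sizeU : UBT → ℕ
  | .leaf => 0
  | .node l r => sizeU l + sizeU r + 1

/-- Orientations of the leaves, from left to right: `true` means right-oriented
(the leaf is the right child of its parent); the parameter is the orientation
assigned if the tree is reduced to a leaf. -/
def loU : UBT → Bool → List Bool
  | .leaf, b => [b]
  | .node l r, _ => loU l false ++ loU r true

/-- Leaf orientations of a labeled binary tree. -/
def loB : BT → Bool → List Bool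
  | .leaf, b => [b]
  | .node l _ r, _ => loB l false ++ loB r true

/-- The canopy: orientations of the leaves except the first and the last one. -/
def canU (t : UBT) : List Bool := ((loU t false).drop 1).dropLast

/-- A pair of twin binary trees: same number of nodes and complementary canopies. -/
def IsTwin (J : UBT × UBT) : Prop :=
  sizeU J.1 = sizeU J.2 ∧ (canU J.1).length = (canU J.2).length ∧
    ∀ i < (canU J.1).length, (canU J.1).getD i false ≠ (canU J.2).getD i false

/-- `σ` is (the word of) a permutation of `{1, …, n}`. -/
def IsPerm (n : ℕ) (σ : List ℕ) : Prop := σ.Perm (List.range' 1 n)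

/-- Covering-type step of the right permutohedron (weak) order: exchange of two
adjacent letters `a < b`. -/
def PermutoStep (σ ν : List ℕ) : Prop :=
  ∃ (p s : List ℕ) (a b : ℕ), a < b ∧ σ = p ++ a :: b :: s ∧ ν = p ++ b :: a :: s

/-- The right permutohedron (weak) order. -/
def PermutoLe : List ℕ → List ℕ → Prop := Relation.ReflTransGen PermutoStep

/-- Baxter permutations: avoiding the generalized patterns 2-41-3 and 3-14-2. -/
def IsBaxterPerm (σ : List ℕ) : Prop :=
  ∀ i j k, i < j → j + 1 < k → k < σ.length →
    ¬(σ.getD (j+1) 0 < σ.getD i 0 ∧ σ.getD i 0 < σ.getD k 0 ∧ σ.getD k 0 < σ.getD j 0) ∧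
    ¬(σ.getD j 0 < σ.getD k 0 ∧ σ.getD k 0 < σ.getD i 0 ∧ σ.getD i 0 < σ.getD (j+1) 0)

/-- The free quasi-symmetric functions, modeled as finitely supported functions
on words (the fundamental basis element `F_σ` is `Finsupp.single σ 1`). -/
abbrev FQSym := List ℕ →₀ ℚ

/-- Model for `FQSym ⊗ FQSym`. -/
abbrev FQSym2 := (List ℕ × List ℕ) →₀ ℚ

/-- The list of shuffles of two words. -/
def shuffles : List ℕ → List ℕ → List (List ℕ)
  | [], v => [v]
  | u, [] => [u]
  | a :: u, b :: v =>
      (shuffles u (b :: v)).map (a :: ·) ++ (shuffles (a :: u) v).map (b :: ·)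
termination_by u v => u.length + v.length
decreasing_by all_goals (simp; try omega)

/-- The shifted shuffle of two permutations. -/
def shShuffles (σ ν : List ℕ) : List (List ℕ) := shuffles σ (ν.map (· + σ.length))

/-- The product of FQSym on the fundamental basis: shifted shuffle. -/
noncomputable def fqMul (x y : FQSym) : FQSym :=
  x.sum fun σ a => y.sum fun ν b =>
    ((shShuffles σ ν).map fun π => Finsupp.single π (a * b)).sum

/-- The coproduct of FQSym: deconcatenation followed by standardization. -/
noncomputable def fqCoprod (x : FQSym) : FQSym2 :=
  x.sum fun σ a =>
    ((List.range (σ.length + 1)).map fun i =>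
      Finsupp.single (std (σ.take i), std (σ.drop i)) a).sum

/-- The tensor product of two elements of FQSym, in the model `FQSym2`. -/
noncomputable def fqTensor (x y : FQSym) : FQSym2 :=
  x.sum fun σ a => y.sum fun ν b => Finsupp.single (σ, ν) (a * b)

/-- All permutations of `{1, …, n}` as words. -/
def permsOf (n : ℕ) : List (List ℕ) := (List.range' 1 n).permutations

/-- The basis element `P_J` of Baxter: the sum of `F_σ` over the permutations
of size `n` whose P-symbol has shape `J`. -/
noncomputable def PJ (n : ℕ) (J : UBT × UBT) : FQSym :=
  (((permsOf n).filter fun σ => decide (Pshape σ = J)).map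
    fun σ => Finsupp.single σ (1 : ℚ)).sum

/-- The Baxter order on pairs of twin binary trees, induced by the
permutohedron order via the insertion algorithm. -/
def leB (J0 J1 : UBT × UBT) : Prop :=
  ∃ (n : ℕ) (σ0 σ1 : List ℕ), IsPerm n σ0 ∧ IsPerm n σ1 ∧
    Pshape σ0 = J0 ∧ Pshape σ1 = J1 ∧ PermutoLe σ0 σ1

/-- The elementary basis element `E_J = Σ_{J ≤_B J'} P_{J'}`, expanded on the
fundamental basis of FQSym. -/
noncomputable def EJ (n : ℕ) (J : UBT × UBT) : FQSym :=
  (((permsOf n).filter fun σ => decide (leB J (Pshape σ))).map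
    fun σ => Finsupp.single σ (1 : ℚ)).sum

/-- The homogeneous basis element `H_J = Σ_{J' ≤_B J} P_{J'}`, expanded on the
fundamental basis of FQSym. -/
noncomputable def HJ (n : ℕ) (J : UBT × UBT) : FQSym :=
  (((permsOf n).filter fun σ => decide (leB (Pshape σ) J)).map
    fun σ => Finsupp.single σ (1 : ℚ)).sum

/-- `t / t'` : graft `t` on the leftmost leaf of `t'`. -/
def graftL (t : UBT) : UBT → UBT
  | .leaf => t
  | .node l r => .node (graftL t l) r

/-- `t \ t'` : graft `t'` on the rightmost leaf of `t`. -/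
def graftR : UBT → UBT → UBT
  | .leaf, t' => t'
  | .node l r, t' => .node l (graftR r t')

/-- `J0 / J1 = (T⁰_L \ T¹_L, T⁰_R / T¹_R)`. -/
def overJ (J0 J1 : UBT × UBT) : UBT × UBT := (graftR J0.1 J1.1, graftL J0.2 J1.2)

/-- `J0 \ J1 = (T⁰_L / T¹_L, T⁰_R \ T¹_R)`. -/
def underJ (J0 J1 : UBT × UBT) : UBT × UBT := (graftL J0.1 J1.1, graftR J0.2 J1.2)

namespace Bx

/-- `x` occurs before `y` in the word. -/
def bef : List ℕ → ℕ → ℕ → Prop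
  | [], _, _ => False
  | b :: l, x, y => (x = b ∧ y ∈ l) ∨ bef l x y

theorem bef_mem {l : List ℕ} {x y : ℕ} (h : bef l x y) : x ∈ l ∧ y ∈ l := by
  induction l with
  | nil => exact h.elim
  | cons b l ih => simp only [bef] at h; grind

theorem bef_append (p s : List ℕ) (x y : ℕ) :
    bef (p ++ s) x y ↔ bef p x y ∨ bef s x y ∨ (x ∈ p ∧ y ∈ s) := by
  induction p with
  | nil => simp [bef]
  | cons b l ih => simp only [List.cons_append, bef, ih, List.mem_append, List.mem_cons]; tauto

theorem bef_filter (P : ℕ → Bool) (l : List ℕ) (x y : ℕ) :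
    bef (l.filter P) x y ↔ P x = true ∧ P y = true ∧ bef l x y := by
  induction l with
  | nil => simp [bef]
  | cons b l ih =>
    by_cases hb : P b = true
    · simp only [List.filter_cons_of_pos hb, bef, ih, List.mem_filter]; grind
    · simp only [List.filter_cons_of_neg hb, bef, ih]; grind

theorem bef_reverse (l : List ℕ) (x y : ℕ) : bef l.reverse x y ↔ bef l y x := by
  induction l with
  | nil => simp [bef]
  | cons b l ih => simp [bef_append, bef, ih]; tauto

theorem bef_total {l : List ℕ} {x y : ℕ} (hx : x ∈ l) (hy : y ∈ l) (h : x ≠ y) :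
    bef l x y ∨ bef l y x := by
  induction l with
  | nil => simp at hx
  | cons b l ih => simp only [bef, List.mem_cons] at *; grind

theorem bef_asymm {l : List ℕ} (hl : l.Nodup) {x y : ℕ} (h : bef l x y) : ¬ bef l y x := by
  induction l with
  | nil => exact h.elim
  | cons b l ih =>
    have hm := @bef_mem l x y
    have hm' := @bef_mem l y x
    simp only [bef, List.nodup_cons] at *; grind

theorem bef_trans {l : List ℕ} (hl : l.Nodup) {x y z : ℕ} (h : bef l x y) (h' : bef l y z) :
    bef l x z := by
  induction l with
  | nil => exact h.elim
  | cons b l ih =>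
    have hm := @bef_mem l x y
    have hm' := @bef_mem l y z
    simp only [bef, List.nodup_cons] at *; grind

theorem bef_split {l : List ℕ} {x y : ℕ} (h : bef l x y) :
    ∃ u m v, l = u ++ x :: (m ++ y :: v) := by
  induction l with
  | nil => exact h.elim
  | cons b l ih =>
    rcases h with ⟨rfl, h⟩ | h
    · obtain ⟨m, v, rfl⟩ := List.append_of_mem h
      exact ⟨[], m, v, rfl⟩
    · obtain ⟨u, m, v, rfl⟩ := ih h
      exact ⟨b :: u, m, v, rfl⟩

/-- Inclusion of inversions. -/
def Le (σ ν : List ℕ) : Prop := ∀ a d, a < d → bef σ d a → bef ν d a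

theorem le_of_step {σ ν : List ℕ} (h : PermutoStep σ ν) : Le σ ν ∧ σ.Perm ν := by
  obtain ⟨p, s, a, b, hab, rfl, rfl⟩ := h
  refine ⟨?_, (List.Perm.swap _ _ _).append_left p⟩
  intro x y hxy
  simp only [bef_append, bef, List.mem_cons]
  grind

theorem le_of_permutoLe {σ ν : List ℕ} (h : PermutoLe σ ν) : Le σ ν ∧ σ.Perm ν := by
  induction h with
  | refl => exact ⟨fun _ _ _ h => h, .refl _⟩
  | tail _ h ih =>
    have := le_of_step h
    exact ⟨fun a d had h => this.1 a d had (ih.1 a d had h), ih.2.trans this.2⟩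

theorem permutoLe_cons (x : ℕ) {σ ν : List ℕ} (h : PermutoLe σ ν) :
    PermutoLe (x :: σ) (x :: ν) := by
  refine Relation.ReflTransGen.lift (fun l => x :: l) ?_ _ _ h
  rintro _ _ ⟨p, s, a, b, hab, rfl, rfl⟩
  exact ⟨x :: p, s, a, b, hab, rfl, rfl⟩

theorem permutoLe_move (x : ℕ) (p s : List ℕ) (h : ∀ y ∈ p, y < x) :
    PermutoLe (p ++ x :: s) (x :: (p ++ s)) := by
  induction p with
  | nil => exact .refl
  | cons b p ih =>
    have h1 := permutoLe_cons b (ih (fun y hy => h y (by simp [hy])))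
    refine Relation.ReflTransGen.tail h1 ?_
    exact ⟨[], p ++ s, b, x, h b (by simp), rfl, rfl⟩

theorem permutoLe_of_le {σ ν : List ℕ} (hν : ν.Nodup) (hp : σ.Perm ν) (h : Le σ ν) :
    PermutoLe σ ν := by
  induction ν generalizing σ with
  | nil => rw [hp.eq_nil]; exact .refl
  | cons x ν ih =>
    have hx : x ∈ σ := hp.mem_iff.2 (by simp)
    obtain ⟨p, s, rfl⟩ := List.append_of_mem hx
    have hσ : (p ++ x :: s).Nodup := hp.nodup_iff.2 hν
    have hps : (p ++ s).Perm ν := by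
      have := List.perm_middle.symm.trans hp
      exact this.cons_inv
    have hlt : ∀ y ∈ p, y < x := by
      intro y hy
      by_contra hc
      have hne : y ≠ x := by
        rintro rfl
        rw [List.nodup_append] at hσ
        grind
      have h1 : bef (x :: ν) y x := h x y (by omega) (by simp [bef_append, hy])
      have hm := @bef_mem ν y x
      simp only [bef, List.nodup_cons] at h1 hν
      grind
    refine (permutoLe_move x p s hlt).trans (permutoLe_cons x (ih (List.nodup_cons.1 hν).2 hps ?_))
    intro a d had hb
    have h1 : bef (x :: ν) d a := h a d had (by
      simp only [bef_append, bef, List.mem_cons] at hb ⊢; tauto)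
    rcases h1 with ⟨rfl, h1⟩ | h1
    · have := (bef_mem hb).1
      exact absurd (hps.mem_iff.1 this) (List.nodup_cons.1 hν).1
    · exact h1

/-- `x` is the first letter of the word among those between `x` and `y`. -/
def Fst (σ : List ℕ) (x y : ℕ) : Prop :=
  ∀ z ∈ σ, min x y ≤ z → z ≤ max x y → z ≠ x → bef σ x z

theorem fst_swap (u v : List ℕ) (p q x : ℕ) (hn : (u ++ p :: q :: v).Nodup) (hx : x ∈ u)
    (h1 : min p q < x) (h2 : x < max p q) (s t : ℕ) :
    Fst (u ++ p :: q :: v) s t ↔ Fst (u ++ q :: p :: v) s t := by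
  have key : ∀ p q : ℕ, (u ++ p :: q :: v).Nodup → min p q < x → x < max p q →
      Fst (u ++ p :: q :: v) s t → Fst (u ++ q :: p :: v) s t := by
    intro p q hn h1 h2 h z hz hz1 hz2 hz3
    have hb := h z (by simp at hz ⊢; tauto) hz1 hz2 hz3
    by_cases hc : s = p ∧ z = q
    · obtain ⟨rfl, rfl⟩ := hc
      exfalso
      have := h x (by simp [hx]) (by omega) (by omega) (by omega)
      exact bef_asymm hn this (by simp [bef_append, hx])
    · simp only [bef_append, bef, List.mem_cons] at hb ⊢
      grind
  refine ⟨key p q hn h1 h2, key q p ?_ (by omega) (by omega)⟩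
  exact ((List.Perm.swap _ _ _).append_left u).nodup_iff.1 hn

theorem crossing (a d : ℕ) (m : List ℕ) (h : ℕ) (hh : d ≤ h) (had : a < d)
    (hm : ∀ z ∈ m, z ≤ a ∨ d ≤ z) :
    ∃ u p q v, h :: (m ++ [a]) = u ++ p :: q :: v ∧ d ≤ p ∧ q ≤ a := by
  induction m generalizing h with
  | nil => exact ⟨[], h, a, [], rfl, hh, le_rfl⟩
  | cons b m ih =>
    rcases hm b (by simp) with hb | hb
    · exact ⟨[], h, b, m ++ [a], rfl, hh, hb⟩
    · obtain ⟨u, p, q, v, e, hp, hq⟩ := ih b hb (fun z hz => hm z (by simp [hz]))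
      exact ⟨h :: u, p, q, v, by simp [← e], hp, hq⟩

/-- Same Baxter class. -/
def Cl (σ ν : List ℕ) : Prop :=
  (∀ x y, Fst σ x y ↔ Fst ν x y) ∧ (∀ x y, Fst σ.reverse x y ↔ Fst ν.reverse x y)

theorem exists_min (σ : List ℕ) (hσ : σ.Nodup) : ∃ τ : List ℕ, τ.Perm σ ∧ Cl τ σ ∧
    ∀ u v p q x y, τ = u ++ p :: q :: v → x ∈ u → y ∈ v → q < x → x < p → q < y → y < p →
      False := by
  have hfin : {τ : List ℕ | τ.Perm σ ∧ Cl τ σ}.Finite := by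
    refine (List.finite_toSet σ.permutations).subset ?_
    intro τ hτ
    exact List.mem_permutations.2 hτ.1
  obtain ⟨τ, ⟨h1, h2⟩, h3⟩ := Set.exists_min_image _ (fun l : List ℕ => l) hfin
    ⟨σ, .refl _, fun _ _ => Iff.rfl, fun _ _ => Iff.rfl⟩
  refine ⟨τ, h1, h2, ?_⟩
  rintro u v p q x y rfl hx hy h4 h5 h6 h7
  have hn := h1.nodup_iff.2 hσ
  have hlt : u ++ q :: p :: v < u ++ p :: q :: v := by
    apply List.append_left_lt
    exact List.Lex.rel (by omega)
  refine absurd (h3 (u ++ q :: p :: v) ⟨?_, ?_, ?_⟩) (not_le.2 hlt)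
  · exact ((List.Perm.swap _ _ _).append_left u).trans h1
  · intro s t
    rw [← h2.1 s t]
    exact (fst_swap u v p q x hn hx (by omega) (by omega) s t).symm
  · intro s t
    rw [← h2.2 s t]
    have hn' := List.nodup_reverse.2 hn
    have := fst_swap v.reverse u.reverse q p y (by simpa using hn') (by simpa using hy)
      (by omega) (by omega) s t
    simpa using this.symm

theorem core {σ0 σ1 π : List ℕ} (hp : σ0.Perm π) (hp1 : σ1.Perm π) (hn : π.Nodup)
    (hle : Le σ0 σ1)
    (hcl : ∀ x y, y ∈ π →
      ((Fst σ1 x y ↔ Fst π x y) ∧ (Fst σ1.reverse x y ↔ Fst π.reverse x y))) :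
    ∃ τ : List ℕ, τ.Perm π ∧ Cl τ σ0 ∧ Le τ π := by
  obtain ⟨τ, ht1, ht2, ht3⟩ := exists_min σ0 (hp.nodup_iff.2 hn)
  have htn : τ.Nodup := (ht1.trans hp).nodup_iff.2 hn
  have m0 : ∀ z, z ∈ σ0 ↔ z ∈ π := fun z => hp.mem_iff
  have m1 : ∀ z, z ∈ σ1 ↔ z ∈ π := fun z => hp1.mem_iff
  have mt : ∀ z, z ∈ τ ↔ z ∈ π := fun z => (ht1.trans hp).mem_iff
  refine ⟨τ, ht1.trans hp, ht2, ?_⟩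
  have main : ∀ k a d, d - a = k → a < d → bef τ d a → bef π d a := by
    intro k
    induction k using Nat.strong_induction_on with
    | _ k ih =>
    intro a d hk had hb
    have hmem := bef_mem hb
    by_cases hF : Fst τ d a
    · have f0 := (ht2.1 d a).1 hF
      have f1 : Fst σ1 d a := by
        intro z hz h1 h2 h3
        exact hle z d (by omega) (f0 z ((m0 z).2 ((m1 z).1 hz)) h1 h2 h3)
      exact (hcl d a ((mt a).1 hmem.2)).1.1 f1 a ((mt a).1 hmem.2) (by omega) (by omega) (by omega)
    by_cases hL : Fst τ.reverse a d
    · have f0 := (ht2.2 a d).1 hL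
      have f1 : Fst σ1.reverse a d := by
        intro z hz h1 h2 h3
        rw [bef_reverse]
        refine hle a z (by omega) ?_
        rw [← bef_reverse]
        exact f0 z (List.mem_reverse.2 ((m0 z).2 ((m1 z).1 (List.mem_reverse.1 hz)))) h1 h2 h3
      rw [← bef_reverse]
      exact (hcl a d ((mt d).1 hmem.1)).2.1 f1 d (List.mem_reverse.2 ((mt d).1 hmem.1)) (by omega) (by omega)
        (by omega)
    by_cases hz : ∃ z, a < z ∧ z < d ∧ bef τ d z ∧ bef τ z a
    · obtain ⟨z, h1, h2, h3, h4⟩ := hz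
      exact bef_trans hn (ih (d - z) (by omega) z d rfl h2 h3)
        (ih (z - a) (by omega) a z rfl h1 h4)
    exfalso
    simp only [Fst, not_forall] at hF hL
    obtain ⟨x, hx, hx1, hx2, hx3, hx4⟩ := hF
    obtain ⟨y, hy, hy1, hy2, hy3, hy4⟩ := hL
    rw [bef_reverse] at hy4
    rw [List.mem_reverse] at hy
    have hxa : x ≠ a := by rintro rfl; exact hx4 hb
    have hyd : y ≠ d := by rintro rfl; exact hy4 hb
    have bx : bef τ x d := (bef_total hx hmem.1 hx3).resolve_right hx4
    have bY : bef τ a y := (bef_total hy hmem.2 hy3).resolve_left hy4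
    obtain ⟨u0, m, v0, rfl⟩ := bef_split hb
    have hxu : x ∈ u0 := by
      rw [show u0 ++ d :: (m ++ a :: v0) = u0 ++ ([d] ++ (m ++ a :: v0)) by simp] at bx htn
      rw [List.nodup_append] at htn
      simp only [bef_append, bef] at bx
      have := @bef_mem u0 x d
      have h5 := @bef_mem m x d
      have h6 := @bef_mem v0 x d
      grind
    have hyv : y ∈ v0 := by
      rw [bef_append, bef, bef_append, bef] at bY
      have h4 := @bef_mem u0 a y
      have h5 := @bef_mem m a y
      have h6 := @bef_mem v0 a y
      simp only [List.nodup_append, List.nodup_cons] at htn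
      grind
    have hm : ∀ z ∈ m, z ≤ a ∨ d ≤ z := by
      intro z hzm
      by_contra hc
      push Not at hc
      exact hz ⟨z, hc.1, hc.2, by simp [bef_append, bef, hzm], by simp [bef_append, bef, hzm]⟩
    obtain ⟨u, p, q, v, e, hp, hq⟩ := crossing a d m d le_rfl had hm
    refine ht3 (u0 ++ u) (v ++ v0) p q x y ?_ (by simp [hxu]) (by simp [hyv])
      (by omega) (by omega) (by omega) (by omega)
    have : u0 ++ d :: (m ++ a :: v0) = u0 ++ (d :: (m ++ [a])) ++ v0 := by simp
    rw [this, e]; simp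
  exact fun a d had hb => main _ a d rfl had hb

/-! Trees -/

theorem foldl_leafInsL (w : List ℕ) (l : BT) (b : ℕ) (r : BT) :
    w.foldl leafInsL (.node l b r) =
      .node ((w.filter (fun x => decide (x < b))).foldl leafInsL l) b
        ((w.filter (fun x => decide (b ≤ x))).foldl leafInsL r) := by
  induction w generalizing l r with
  | nil => rfl
  | cons a w ih =>
    by_cases h : a < b
    · have h' : ¬ b ≤ a := by omega
      simp [leafInsL, h, h', ih]
    · have h' : b ≤ a := by omega
      simp [leafInsL, h, h', ih]

theorem insL_cons (a : ℕ) (w : List ℕ) :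
    insL (a :: w) = .node (insL (w.filter (fun x => decide (x < a)))) a
      (insL (w.filter (fun x => decide (a ≤ x)))) := by
  simp [insL, leafInsL, foldl_leafInsL]

/-- Every letter of a tree. -/
def inord : BT → List ℕ
  | .leaf => []
  | .node l a r => inord l ++ a :: inord r

theorem inord_insL (k : ℕ) (w : List ℕ) (hk : w.length ≤ k) (hw : w.Nodup) :
    (inord (insL w)).Perm w ∧ (inord (insL w)).Pairwise (· < ·) := by
  induction k generalizing w with
  | zero =>
    have : w = [] := List.length_eq_zero_iff.1 (by omega)
    subst this; simp [insL, inord]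
  | succ k ih =>
    cases w with
    | nil => simp [insL, inord]
    | cons a w =>
      rw [insL_cons]
      simp only [List.length_cons] at hk
      have hw' := List.nodup_cons.1 hw
      have i1 := ih (w.filter (fun x => decide (x < a)))
        ((List.length_filter_le _ _).trans (by omega)) (hw'.2.filter _)
      have i2 := ih (w.filter (fun x => decide (a ≤ x)))
        ((List.length_filter_le _ _).trans (by omega)) (hw'.2.filter _)
      refine ⟨?_, ?_⟩
      · simp only [inord]
        refine List.perm_middle.trans (List.Perm.cons a ?_)
        refine (i1.1.append i2.1).trans ?_
        have : (fun x => decide (a ≤ x)) = (fun x => !decide (x < a)) := by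
          funext x; by_cases h : x < a <;> simp [h] <;> omega
        rw [this]
        exact List.filter_append_perm _ _
      · simp only [inord]
        rw [List.pairwise_append, List.pairwise_cons]
        have m1 : ∀ x ∈ inord (insL (w.filter (fun x => decide (x < a)))), x < a := by
          intro x hx; simpa using (List.mem_filter.1 (i1.1.mem_iff.1 hx)).2
        have m2 : ∀ x ∈ inord (insL (w.filter (fun x => decide (a ≤ x)))), a < x := by
          intro x hx
          have := List.mem_filter.1 (i2.1.mem_iff.1 hx)
          have h2 : a ≤ x := by simpa using this.2
          have : x ≠ a := by rintro rfl; exact hw'.1 this.1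
          omega
        refine ⟨i1.2, ⟨m2, i2.2⟩, ?_⟩
        intro x hx y hy
        have := m1 x hx
        rcases List.mem_cons.1 hy with rfl | hy
        · exact this
        · have := m2 y hy; omega

theorem length_inord (t : BT) : (inord t).length = sizeU (shape t) := by
  induction t with
  | leaf => rfl
  | node l a r ihl ihr => simp [inord, shape, sizeU, ihl, ihr]; omega

theorem size_insL (w : List ℕ) (hw : w.Nodup) : sizeU (shape (insL w)) = w.length := by
  rw [← length_inord, (inord_insL _ w le_rfl hw).1.length_eq]

theorem eq_of_shape (t t' : BT) (h : shape t = shape t') (h' : inord t = inord t') : t = t' := by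
  induction t generalizing t' with
  | leaf => cases t' with
    | leaf => rfl
    | node l a r => simp [shape] at h
  | node l a r ihl ihr =>
    cases t' with
    | leaf => simp [shape] at h
    | node l' a' r' =>
      simp only [shape, UBT.node.injEq] at h
      simp only [inord] at h'
      obtain ⟨e1, e2⟩ := List.append_inj h' (by rw [length_inord, length_inord, h.1])
      rw [List.cons.injEq] at e2
      rw [ihl l' h.1 e1, ihr r' h.2 e2.2, e2.1]

theorem insL_eq_of_shape {σ ν : List ℕ} (hp : σ.Perm ν) (hn : ν.Nodup)
    (h : shape (insL σ) = shape (insL ν)) : insL σ = insL ν := by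
  apply eq_of_shape _ _ h
  have i1 := inord_insL _ σ le_rfl (hp.nodup_iff.2 hn)
  have i2 := inord_insL _ ν le_rfl hn
  exact List.Perm.eq_of_pairwise' i1.2 i2.2 (i1.1.trans (hp.trans i2.1.symm))

theorem fst_filter (P : ℕ → Bool) (w : List ℕ) (x y : ℕ)
    (h : ∀ z, min x y ≤ z → z ≤ max x y → P z = true) :
    Fst (w.filter P) x y ↔ Fst w x y := by
  have hx := h x (by omega) (by omega)
  simp only [Fst, bef_filter, List.mem_filter]
  constructor
  · intro H z hz h1 h2 h3
    exact (H z ⟨hz, h z h1 h2⟩ h1 h2 h3).2.2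
  · intro H z hz h1 h2 h3
    exact ⟨hx, hz.2, H z hz.1 h1 h2 h3⟩

theorem fst_cons (a : ℕ) (w : List ℕ) (hn : (a :: w).Nodup) (x y : ℕ) :
    Fst (a :: w) x y ↔ x = a ∨ (¬ (min x y ≤ a ∧ a ≤ max x y) ∧ Fst w x y) := by
  have hm := @bef_mem w x
  simp only [Fst, bef, List.nodup_cons, List.mem_cons] at *
  constructor
  · intro H
    by_cases hxa : x = a
    · exact Or.inl hxa
    · right
      constructor
      · rintro ⟨h1, h2⟩
        have := H a (Or.inl rfl) h1 h2 (Ne.symm hxa)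
        grind
      · intro z hz h1 h2 h3
        have := H z (Or.inr hz) h1 h2 h3
        grind
  · rintro (rfl | ⟨h1, h2⟩) z hz h3 h4 h5
    · left; grind
    · rcases hz with rfl | hz
      · exact absurd ⟨h3, h4⟩ h1
      · exact Or.inr (h2 z hz h3 h4 h5)

theorem fst_iff_of_insL_eq (k : ℕ) (σ ν : List ℕ) (hk : σ.length ≤ k) (hs : σ.Nodup)
    (hn : ν.Nodup) (h : insL σ = insL ν) (x y : ℕ) (hy : y ∈ σ) (hy' : y ∈ ν) :
    Fst σ x y ↔ Fst ν x y := by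
  induction k generalizing σ ν with
  | zero =>
    have : σ = [] := List.length_eq_zero_iff.1 (by omega)
    subst this; simp at hy
  | succ k ih =>
    cases σ with
    | nil => simp at hy
    | cons a w =>
      cases ν with
      | nil => simp at hy'
      | cons b v =>
        rw [insL_cons, insL_cons] at h
        rw [BT.node.injEq] at h
        obtain ⟨h1, rfl, h2⟩ := h
        rw [fst_cons _ _ hs, fst_cons _ _ hn]
        simp only [List.length_cons, List.nodup_cons, List.mem_cons] at *
        by_cases hc : min x y ≤ a ∧ a ≤ max x y
        · simp [hc]
        · have : Fst w x y ↔ Fst v x y := by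
            by_cases hlt : y < a
            · rw [← fst_filter (fun z => decide (z < a)) w x y (by grind),
                ← fst_filter (fun z => decide (z < a)) v x y (by grind)]
              exact ih _ _ ((List.length_filter_le _ _).trans (by omega)) (hs.2.filter _)
                (hn.2.filter _) h1 (by simp; grind) (by simp; grind)
            · rw [← fst_filter (fun z => decide (a ≤ z)) w x y (by grind),
                ← fst_filter (fun z => decide (a ≤ z)) v x y (by grind)]
              exact ih _ _ ((List.length_filter_le _ _).trans (by omega)) (hs.2.filter _)
                (hn.2.filter _) h2 (by simp; grind) (by simp; grind)
          rw [this]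

theorem insL_eq_of_fst (k : ℕ) (σ ν : List ℕ) (hk : σ.length ≤ k) (hp : σ.Perm ν)
    (hn : ν.Nodup) (h : ∀ x ∈ ν, ∀ y ∈ ν, (Fst σ x y ↔ Fst ν x y)) : insL σ = insL ν := by
  induction k generalizing σ ν with
  | zero =>
    have : σ = [] := List.length_eq_zero_iff.1 (by omega)
    subst this; rw [hp.nil_eq]
  | succ k ih =>
    have hs := hp.nodup_iff.2 hn
    cases σ with
    | nil => rw [hp.nil_eq]
    | cons a w =>
      cases ν with
      | nil => simp at hp
      | cons b v =>
        have hab : a = b := by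
          have ha : a ∈ b :: v := hp.mem_iff.1 (by simp)
          have := (h a ha b (by simp)).1 ((fst_cons a w hs a b).2 (Or.inl rfl))
          rw [fst_cons _ _ hn] at this
          rcases this with h1 | h1
          · exact h1
          · exact absurd ⟨by omega, by omega⟩ h1.1
        subst hab
        have hp' := hp.cons_inv
        rw [insL_cons, insL_cons]
        simp only [List.length_cons] at hk
        have hn' := List.nodup_cons.1 hn
        have h' : ∀ x ∈ v, ∀ y ∈ v, ¬ (min x y ≤ a ∧ a ≤ max x y) →
            (Fst w x y ↔ Fst v x y) := by
          intro x hx y hy hc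
          have := h x (by simp [hx]) y (by simp [hy])
          rw [fst_cons _ _ hs, fst_cons _ _ hn] at this
          have hxa : x ≠ a := by rintro rfl; exact hn'.1 hx
          rw [or_iff_right hxa, or_iff_right hxa, and_iff_right hc, and_iff_right hc] at this
          exact this
        rw [ih (w.filter (fun x => decide (x < a))) (v.filter (fun x => decide (x < a)))
          ((List.length_filter_le _ _).trans (by omega)) (hp'.filter _) (hn'.2.filter _) ?_,
          ih (w.filter (fun x => decide (a ≤ x))) (v.filter (fun x => decide (a ≤ x)))
          ((List.length_filter_le _ _).trans (by omega)) (hp'.filter _) (hn'.2.filter _) ?_]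
        · intro x hx y hy
          rw [List.mem_filter] at hx hy
          have hxa : x ≠ a := by rintro rfl; exact hn'.1 hx.1
          have hya : y ≠ a := by rintro rfl; exact hn'.1 hy.1
          rw [fst_filter _ _ _ _ (by grind), fst_filter _ _ _ _ (by grind)]
          exact h' x hx.1 y hy.1 (by grind)
        · intro x hx y hy
          rw [List.mem_filter] at hx hy
          rw [fst_filter _ _ _ _ (by grind), fst_filter _ _ _ _ (by grind)]
          exact h' x hx.1 y hy.1 (by grind)

/-! insR versus insL -/

theorem split_leaf (t : BT) (a b : ℕ) :
    splitLE (splitLE t a) b = splitLE t (min a b) ∧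
    splitGT (splitGT t a) b = splitGT t (max a b) ∧
    (a ≤ b → splitLE (splitGT t a) b = splitGT (splitLE t b) a) := by
  induction t with
  | leaf => simp [splitLE, splitGT]
  | node l c r ihl ihr =>
    refine ⟨?_, ?_, ?_⟩ <;> simp only [splitLE, splitGT] <;> split_ifs <;>
      simp_all [splitLE, splitGT] <;> grind

theorem split_rootIns (t : BT) (b a : ℕ) :
    splitLE (rootIns t b) a = (if b ≤ a then rootIns (splitLE t a) b else splitLE t a) ∧
    splitGT (rootIns t b) a = (if a < b then rootIns (splitGT t a) b else splitGT t a) := by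
  have h1 := split_leaf t b a
  have h2 := split_leaf t a b
  by_cases h : b ≤ a
  · have h' : ¬ a < b := by omega
    rw [min_eq_left h, max_eq_right h] at h1
    rw [min_eq_right h] at h2
    simp [rootIns, splitLE, splitGT, h, h', h1, h2]
  · have h' : a < b := by omega
    rw [min_eq_right h'.le] at h1
    rw [max_eq_right h'.le] at h2
    simp [rootIns, splitLE, splitGT, h, h', h1, h2, h'.le]

theorem split_insR (w : List ℕ) (a : ℕ) :
    splitLE (insR w) a = insR (w.filter (fun x => decide (x ≤ a))) ∧
    splitGT (insR w) a = insR (w.filter (fun x => decide (a < x))) := by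
  induction w using List.reverseRecOn with
  | nil => simp [insR, splitLE, splitGT]
  | append_singleton w b ih =>
    have e : ∀ w b, insR (w ++ [b]) = rootIns (insR w) b := by intro w b; simp [insR]
    rw [e, (split_rootIns _ _ _).1, (split_rootIns _ _ _).2, ih.1, ih.2]
    by_cases h : b ≤ a
    · have h' : ¬ a < b := by omega
      simp [h, h', e]
    · have h' : a < b := by omega
      simp [h, h', e]

theorem insR_eq (k : ℕ) (w : List ℕ) (hk : w.length ≤ k) (hw : w.Nodup) :
    insR w = insL w.reverse := by
  induction k generalizing w with
  | zero =>
    have : w = [] := List.length_eq_zero_iff.1 (by omega)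
    subst this; rfl
  | succ k ih =>
    rcases List.eq_nil_or_concat' w with rfl | ⟨w, a, rfl⟩
    · rfl
    · have e : insR (w ++ [a]) = rootIns (insR w) a := by simp [insR]
      have hw' : w.Nodup ∧ a ∉ w := by
        have := List.nodup_reverse.2 hw
        simp at this
        tauto
      simp only [List.length_append, List.length_singleton] at hk
      rw [e, rootIns, (split_insR _ _).1, (split_insR _ _).2, List.reverse_append,
        List.reverse_singleton, List.singleton_append, insL_cons,
        ih _ ((List.length_filter_le _ _).trans (by omega)) (hw'.1.filter _),
        ih _ ((List.length_filter_le _ _).trans (by omega)) (hw'.1.filter _),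
        List.filter_reverse, List.filter_reverse]
      congr 3
      · apply List.filter_congr
        intro x hx
        have : x ≠ a := by rintro rfl; exact hw'.2 hx
        simp; omega
      · apply List.filter_congr
        intro x hx
        have : x ≠ a := by rintro rfl; exact hw'.2 hx
        simp; omega

theorem pshape_eq {w : List ℕ} (hw : w.Nodup) :
    Pshape w = (shape (insL w), shape (insL w.reverse)) := by
  rw [Pshape, insR_eq _ w le_rfl hw]

theorem pshape_reverse {w : List ℕ} (hw : w.Nodup) : Pshape w.reverse = (Pshape w).swap := by
  rw [pshape_eq hw, pshape_eq (List.nodup_reverse.2 hw)]; simp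

theorem cl_of_pshape {σ ν : List ℕ} (hp : σ.Perm ν) (hn : ν.Nodup) (h : Pshape σ = Pshape ν) :
    ∀ x y, y ∈ ν → ((Fst σ x y ↔ Fst ν x y) ∧ (Fst σ.reverse x y ↔ Fst ν.reverse x y)) := by
  have hs := hp.nodup_iff.2 hn
  rw [pshape_eq hn, pshape_eq hs, Prod.mk.injEq] at h
  have hp' : σ.reverse.Perm ν.reverse :=
    (List.reverse_perm σ).trans (hp.trans (List.reverse_perm ν).symm)
  intro x y hy
  exact ⟨fst_iff_of_insL_eq _ _ _ le_rfl hs hn (insL_eq_of_shape hp hn h.1) x y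
      (hp.mem_iff.2 hy) hy,
    fst_iff_of_insL_eq _ _ _ le_rfl (List.nodup_reverse.2 hs) (List.nodup_reverse.2 hn)
      (insL_eq_of_shape hp' (List.nodup_reverse.2 hn) h.2) x y
      (List.mem_reverse.2 (hp.mem_iff.2 hy)) (List.mem_reverse.2 hy)⟩

theorem pshape_of_cl {σ ν : List ℕ} (hp : σ.Perm ν) (hn : ν.Nodup) (h : Cl σ ν) :
    Pshape σ = Pshape ν := by
  have hs := hp.nodup_iff.2 hn
  have hp' : σ.reverse.Perm ν.reverse :=
    (List.reverse_perm σ).trans (hp.trans (List.reverse_perm ν).symm)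
  rw [pshape_eq hn, pshape_eq hs, insL_eq_of_fst _ _ _ le_rfl hp hn (fun x _ y _ => h.1 x y),
    insL_eq_of_fst _ _ _ le_rfl hp' (List.nodup_reverse.2 hn) (fun x _ y _ => h.2 x y)]

/-- There is a smaller word of shape `J`. -/
def Up (J : UBT × UBT) (π : List ℕ) : Prop := ∃ σ : List ℕ, σ.Perm π ∧ Pshape σ = J ∧ Le σ π

theorem isPerm_nodup {n : ℕ} {σ : List ℕ} (h : IsPerm n σ) : σ.Nodup :=
  (List.Perm.nodup_iff h).2 List.nodup_range'

theorem size_pshape {n : ℕ} {σ : List ℕ} (h : IsPerm n σ) : sizeU (Pshape σ).1 = n := by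
  rw [pshape_eq (isPerm_nodup h)]
  simp only
  rw [size_insL _ (isPerm_nodup h), List.Perm.length_eq h, List.length_range']

theorem leB_iff {n : ℕ} {π : List ℕ} (h : IsPerm n π) (J : UBT × UBT) :
    leB J (Pshape π) ↔ Up J π := by
  have hn := isPerm_nodup h
  constructor
  · rintro ⟨n', σ0, σ1, h0, h1, rfl, e1, hle⟩
    have : n' = n := by rw [← size_pshape h1, ← size_pshape h, e1]
    subst this
    have p0 : σ0.Perm π := h0.trans h.symm
    have p1 : σ1.Perm π := h1.trans h.symm
    obtain ⟨τ, t1, t2, t3⟩ := core p0 p1 hn (le_of_permutoLe hle).1 (cl_of_pshape p1 hn e1)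
    exact ⟨τ, t1, pshape_of_cl (t1.trans p0.symm) (isPerm_nodup h0) t2, t3⟩
  · rintro ⟨σ, h1, h2, h3⟩
    exact ⟨n, σ, π, h1.trans h, h, h2, rfl, permutoLe_of_le hn h1 h3⟩

/-! Restriction and grafting -/

/-- Letters at most `n`. -/
def lo (n : ℕ) (w : List ℕ) : List ℕ := w.filter (fun x => decide (x ≤ n))

/-- Letters greater than `n`. -/
def hi (n : ℕ) (w : List ℕ) : List ℕ := w.filter (fun x => decide (n < x))

theorem size_graftL (t t' : UBT) : sizeU (graftL t t') = sizeU t + sizeU t' := by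
  induction t' with
  | leaf => rfl
  | node l r ihl ihr => simp [graftL, sizeU, ihl]; omega

theorem filter_comm' (P Q : ℕ → Bool) (w : List ℕ) :
    (w.filter P).filter Q = (w.filter Q).filter P := by
  simp only [List.filter_filter]
  apply List.filter_congr
  intro x _
  exact Bool.and_comm _ _

theorem length_split (n : ℕ) (w : List ℕ) : (lo n w).length + (hi n w).length = w.length := by
  induction w with
  | nil => rfl
  | cons a w ih =>
    simp only [lo, hi] at *
    by_cases h : a ≤ n
    · have h' : ¬ n < a := by omega
      simp [h, h']; omega
    · have h' : n < a := by omega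
      simp [h, h']; omega

theorem length_split' (n : ℕ) (w : List ℕ) :
    (w.filter (fun x => decide (x < n))).length + (w.filter (fun x => decide (n ≤ x))).length
      = w.length := by
  induction w with
  | nil => rfl
  | cons a w ih =>
    by_cases h : a < n
    · have h' : ¬ n ≤ a := by omega
      simp [h, h']; omega
    · have h' : n ≤ a := by omega
      simp [h, h']; omega

theorem lo_eq_self {n : ℕ} {w : List ℕ} (h : ∀ x ∈ w, x ≤ n) : lo n w = w :=
  List.filter_eq_self.2 (by simpa using h)

theorem lo_eq_nil {n : ℕ} {w : List ℕ} (h : ∀ x ∈ w, n < x) : lo n w = [] :=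
  List.filter_eq_nil_iff.2 (by simpa using h)

theorem hi_eq_self {n : ℕ} {w : List ℕ} (h : ∀ x ∈ w, n < x) : hi n w = w :=
  List.filter_eq_self.2 (by simpa using h)

theorem hi_eq_nil {n : ℕ} {w : List ℕ} (h : ∀ x ∈ w, x ≤ n) : hi n w = [] :=
  List.filter_eq_nil_iff.2 (by simpa using h)

theorem lo_lt_of_lt {n a : ℕ} (h : n < a) (w : List ℕ) :
    lo n (w.filter (fun x => decide (x < a))) = lo n w := by
  simp only [lo, List.filter_filter]
  apply List.filter_congr
  intro x _
  simp; omega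

theorem lt_lo_of_le {n a : ℕ} (h : a ≤ n) (w : List ℕ) :
    lo n (w.filter (fun x => decide (x < a))) = w.filter (fun x => decide (x < a)) := by
  apply lo_eq_self
  intro x hx
  have := (List.mem_filter.1 hx).2
  simp at this; omega

theorem hi_ge_of_le {n a : ℕ} (h : a ≤ n) (w : List ℕ) :
    hi n (w.filter (fun x => decide (a ≤ x))) = hi n w := by
  simp only [hi, List.filter_filter]
  apply List.filter_congr
  intro x _
  simp; omega

theorem ge_hi_of_lt {n a : ℕ} (h : n < a) (w : List ℕ) :
    hi n (w.filter (fun x => decide (a ≤ x))) = w.filter (fun x => decide (a ≤ x)) := by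
  apply hi_eq_self
  intro x hx
  have := (List.mem_filter.1 hx).2
  simp at this; omega

theorem length_lo_add (n a : ℕ) (w : List ℕ) :
    (lo n w).length = (lo n (w.filter (fun x => decide (x < a)))).length
      + (lo n (w.filter (fun x => decide (a ≤ x)))).length := by
  have := length_split' a (lo n w)
  simp only [lo] at *
  rw [← this, filter_comm', filter_comm' (fun x => decide (x ≤ n)) (fun x => decide (a ≤ x))]

theorem restrict_graftR (n : ℕ) (T0 T1 : UBT) (w : List ℕ) (hw : w.Nodup)
    (h : shape (insL w) = graftR T0 T1) (hs : (lo n w).length = sizeU T0) :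
    shape (insL (lo n w)) = T0 ∧ shape (insL (hi n w)) = T1 := by
  induction T0 generalizing w with
  | leaf =>
    have h0 : lo n w = [] := List.length_eq_zero_iff.1 hs
    have h1 : hi n w = w := by
      apply hi_eq_self
      intro x hx
      by_contra hc
      have : x ∈ lo n w := List.mem_filter.2 ⟨hx, by simpa using hc⟩
      rw [h0] at this; simp at this
    rw [h0, h1]
    exact ⟨rfl, h⟩
  | node l r _ ihr =>
    cases w with
    | nil => simp [insL, shape, graftR] at h
    | cons a w =>
      have hw' := (List.nodup_cons.1 hw).2
      rw [insL_cons] at h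
      simp only [shape, graftR, UBT.node.injEq] at h
      have hl : (w.filter (fun x => decide (x < a))).length = sizeU l := by
        rw [← h.1, size_insL _ (hw'.filter _)]
      have han : a ≤ n := by
        by_contra hc
        have e1 : lo n (a :: w) = lo n w := by simp [lo, hc]
        rw [e1, ← lo_lt_of_lt (n := n) (a := a) (by omega)] at hs
        have := List.length_filter_le (fun x => decide (x ≤ n)) (w.filter (fun x => decide (x < a)))
        simp only [lo, sizeU] at hs
        omega
      have e1 : lo n (a :: w) = a :: lo n w := by simp [lo, han]
      have e2 : hi n (a :: w) = hi n w := by simp [hi, han]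
      rw [e1] at hs
      have h3 := length_lo_add n a w
      rw [lt_lo_of_le han] at h3
      simp only [List.length_cons, sizeU] at hs
      have := ihr _ (hw'.filter _) h.2 (by omega)
      rw [hi_ge_of_le han] at this
      rw [e1, e2, insL_cons]
      refine ⟨?_, this.2⟩
      simp only [shape]
      congr 1
      · have h4 := lt_lo_of_le han w
        simp only [lo] at h4 ⊢
        rw [filter_comm', h4, h.1]
      · have h4 := this.1
        simp only [lo] at h4 ⊢
        rw [filter_comm', h4]

theorem restrict_graftL (n : ℕ) (T0 T1 : UBT) (w : List ℕ) (hw : w.Nodup)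
    (h : shape (insL w) = graftL T0 T1) (hs : (lo n w).length = sizeU T0) :
    shape (insL (lo n w)) = T0 ∧ shape (insL (hi n w)) = T1 := by
  induction T1 generalizing w with
  | leaf =>
    simp only [graftL] at h
    have h1 : w.length = sizeU T0 := by rw [← h, size_insL _ hw]
    have h2 := length_split n w
    have h3 : hi n w = [] := List.length_eq_zero_iff.1 (by omega)
    have h4 : lo n w = w := by
      apply lo_eq_self
      intro x hx
      by_contra hc
      have : x ∈ hi n w := List.mem_filter.2 ⟨hx, by simpa using hc⟩
      rw [h3] at this; simp at this
    rw [h3, h4]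
    exact ⟨h, rfl⟩
  | node l r ihl _ =>
    cases w with
    | nil => simp [insL, shape, graftL] at h
    | cons a w =>
      have hw' := (List.nodup_cons.1 hw).2
      rw [insL_cons] at h
      simp only [shape, graftL, UBT.node.injEq] at h
      have hl : (w.filter (fun x => decide (x < a))).length = sizeU T0 + sizeU l := by
        rw [← size_graftL, ← h.1, size_insL _ (hw'.filter _)]
      have han : n < a := by
        by_contra hc
        have han : a ≤ n := by omega
        have e1 : lo n (a :: w) = a :: lo n w := by simp [lo, han]
        have h3 := length_lo_add n a w
        rw [lt_lo_of_le han] at h3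
        rw [e1, List.length_cons] at hs
        omega
      have han' : ¬ a ≤ n := by omega
      have e1 : lo n (a :: w) = lo n w := by simp [lo, han']
      have e2 : hi n (a :: w) = a :: hi n w := by simp [hi, han]
      have := ihl _ (hw'.filter _) h.1 (by rw [lo_lt_of_lt han, ← e1, hs])
      rw [lo_lt_of_lt han] at this
      rw [e1, e2, insL_cons]
      refine ⟨this.1, ?_⟩
      simp only [shape]
      congr 1
      · have h4 := this.2
        simp only [hi] at h4 ⊢
        rw [filter_comm', h4]
      · have h4 := ge_hi_of_lt han w
        simp only [hi] at h4 ⊢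
        rw [filter_comm', h4, h.2]

theorem shape_append_R (n k : ℕ) (u v : List ℕ) (hk : u.length ≤ k) (hu : ∀ x ∈ u, x ≤ n)
    (hv : ∀ x ∈ v, n < x) :
    shape (insL (u ++ v)) = graftR (shape (insL u)) (shape (insL v)) := by
  induction k generalizing u with
  | zero =>
    have : u = [] := List.length_eq_zero_iff.1 (by omega)
    subst this; rfl
  | succ k ih =>
    cases u with
    | nil => rfl
    | cons a u =>
      simp only [List.length_cons] at hk
      have ha := hu a (by simp)
      have e1 : v.filter (fun x => decide (x < a)) = [] := by
        apply List.filter_eq_nil_iff.2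
        intro x hx; have := hv x hx; simp; omega
      have e2 : v.filter (fun x => decide (a ≤ x)) = v := by
        apply List.filter_eq_self.2
        intro x hx; have := hv x hx; simp; omega
      rw [List.cons_append, insL_cons, insL_cons, List.filter_append, List.filter_append, e1, e2]
      simp only [shape, graftR, List.append_nil]
      rw [ih _ ((List.length_filter_le _ _).trans (by omega))
        (fun x hx => hu x (by simp [(List.mem_filter.1 hx).1]))]

theorem shape_append_L (n k : ℕ) (u v : List ℕ) (hk : v.length ≤ k) (hu : ∀ x ∈ u, x ≤ n)
    (hv : ∀ x ∈ v, n < x) :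
    shape (insL (v ++ u)) = graftL (shape (insL u)) (shape (insL v)) := by
  induction k generalizing v with
  | zero =>
    have : v = [] := List.length_eq_zero_iff.1 (by omega)
    subst this; rfl
  | succ k ih =>
    cases v with
    | nil => rfl
    | cons a v =>
      simp only [List.length_cons] at hk
      have ha := hv a (by simp)
      have e1 : u.filter (fun x => decide (a ≤ x)) = [] := by
        apply List.filter_eq_nil_iff.2
        intro x hx; have := hu x hx; simp; omega
      have e2 : u.filter (fun x => decide (x < a)) = u := by
        apply List.filter_eq_self.2
        intro x hx; have := hu x hx; simp; omega
      rw [List.cons_append, insL_cons, insL_cons, List.filter_append, List.filter_append, e1, e2]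
      simp only [shape, graftL, List.append_nil]
      rw [ih _ ((List.length_filter_le _ _).trans (by omega))
        (fun x hx => hv x (by simp [(List.mem_filter.1 hx).1]))]

theorem lo_append_hi_perm (n : ℕ) (w : List ℕ) : (lo n w ++ hi n w).Perm w := by
  have : (fun x => decide (n < x)) = (fun x => !decide (x ≤ n)) := by
    funext x; by_cases h : x ≤ n
    · simp [h]
    · simp [h]; omega
  rw [lo, hi, this]
  exact List.filter_append_perm _ _

theorem up_over (n : ℕ) (J0 J1 : UBT × UBT) (π : List ℕ) (hn : π.Nodup)
    (hs : sizeU J0.1 = (lo n π).length) (hs2 : sizeU J0.2 = (lo n π).length) :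
    Up (overJ J0 J1) π ↔ Up J0 (lo n π) ∧ Up J1 (hi n π) := by
  have nlo : ∀ {w : List ℕ}, w.Nodup → (lo n w).Nodup := fun h => h.filter _
  have nhi : ∀ {w : List ℕ}, w.Nodup → (hi n w).Nodup := fun h => h.filter _
  have rlo : ∀ w : List ℕ, (lo n w).reverse = lo n w.reverse :=
    fun w => (List.filter_reverse ..).symm
  have rhi : ∀ w : List ℕ, (hi n w).reverse = hi n w.reverse :=
    fun w => (List.filter_reverse ..).symm
  constructor
  · rintro ⟨σ, h1, h2, h3⟩
    have hσ := h1.nodup_iff.2 hn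
    have hr := List.nodup_reverse.2 hσ
    have plo : (lo n σ).Perm (lo n π) := h1.filter _
    have phi : (hi n σ).Perm (hi n π) := h1.filter _
    rw [pshape_eq hσ, overJ, Prod.mk.injEq] at h2
    have r1 := restrict_graftR n _ _ σ hσ h2.1 (by rw [hs, plo.length_eq])
    have r2 := restrict_graftL n _ _ σ.reverse hr h2.2
      (by rw [hs2, ← plo.length_eq, ← rlo, List.length_reverse])
    refine ⟨⟨lo n σ, plo, ?_, ?_⟩, ⟨hi n σ, phi, ?_, ?_⟩⟩
    · rw [pshape_eq (nlo hσ), rlo, r1.1, r2.1]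
    · intro a d had hb
      simp only [lo, bef_filter] at hb ⊢
      exact ⟨hb.1, hb.2.1, h3 a d had hb.2.2⟩
    · rw [pshape_eq (nhi hσ), rhi, r1.2, r2.2]
    · intro a d had hb
      simp only [hi, bef_filter] at hb ⊢
      exact ⟨hb.1, hb.2.1, h3 a d had hb.2.2⟩
  · rintro ⟨⟨σ, h1, h2, h3⟩, ⟨ν, h4, h5, h6⟩⟩
    have hp : (σ ++ ν).Perm π := (h1.append h4).trans (lo_append_hi_perm n π)
    have hσ : ∀ x ∈ σ, x ≤ n := fun x hx => by
      simpa using (List.mem_filter.1 (h1.mem_iff.1 hx)).2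
    have hν : ∀ x ∈ ν, n < x := fun x hx => by
      simpa using (List.mem_filter.1 (h4.mem_iff.1 hx)).2
    refine ⟨σ ++ ν, hp, ?_, ?_⟩
    · rw [pshape_eq (hp.nodup_iff.2 hn), List.reverse_append,
        shape_append_R n _ σ ν le_rfl hσ hν,
        shape_append_L n _ σ.reverse ν.reverse le_rfl (by simpa using hσ) (by simpa using hν),
        ← h2, ← h5, pshape_eq (h1.nodup_iff.2 (nlo hn)), pshape_eq (h4.nodup_iff.2 (nhi hn))]
      rfl
    · intro a d had hb
      rw [bef_append] at hb
      rcases hb with hb | hb | hb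
      · exact ((bef_filter _ _ _ _).1 (h3 a d had hb)).2.2
      · exact ((bef_filter _ _ _ _).1 (h6 a d had hb)).2.2
      · have := hσ _ hb.1
        have := hν _ hb.2
        omega

/-! Shift -/

theorem filter_map_add (n : ℕ) (P Q : ℕ → Bool) (h : ∀ x, P (x + n) = Q x) (w : List ℕ) :
    (w.map (· + n)).filter P = (w.filter Q).map (· + n) := by
  rw [List.filter_map]
  congr 1
  apply List.filter_congr
  intro x _
  exact h x

theorem shape_shift (n k : ℕ) (w : List ℕ) (hk : w.length ≤ k) :
    shape (insL (w.map (· + n))) = shape (insL w) := by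
  induction k generalizing w with
  | zero =>
    have : w = [] := List.length_eq_zero_iff.1 (by omega)
    subst this; rfl
  | succ k ih =>
    cases w with
    | nil => rfl
    | cons a w =>
      simp only [List.length_cons] at hk
      rw [List.map_cons, insL_cons, insL_cons,
        filter_map_add n _ (fun x => decide (x < a)) (by simp),
        filter_map_add n _ (fun x => decide (a ≤ x)) (by simp)]
      simp only [shape]
      rw [ih _ ((List.length_filter_le _ _).trans (by omega)),
        ih _ ((List.length_filter_le _ _).trans (by omega))]

theorem add_inj' (n : ℕ) : Function.Injective (fun x : ℕ => x + n) := fun x y h => by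
  simpa using h

theorem pshape_shift (n : ℕ) (w : List ℕ) (hw : w.Nodup) :
    Pshape (w.map (· + n)) = Pshape w := by
  rw [pshape_eq hw, pshape_eq (hw.map (add_inj' n)), ← List.map_reverse,
    shape_shift n _ _ le_rfl, shape_shift n _ _ le_rfl]

theorem bef_shift (n : ℕ) (w : List ℕ) (x y : ℕ) :
    bef (w.map (· + n)) (x + n) (y + n) ↔ bef w x y := by
  induction w with
  | nil => simp [bef]
  | cons a w ih => simp only [List.map_cons, bef, ih]; simp

theorem up_shift (n : ℕ) (J : UBT × UBT) (w : List ℕ) (hw : w.Nodup) :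
    Up J (w.map (· + n)) ↔ Up J w := by
  constructor
  · rintro ⟨σ, h1, h2, h3⟩
    have hσ : σ = (σ.map (· - n)).map (· + n) := by
      rw [List.map_map]
      conv_lhs => rw [← List.map_id σ]
      apply List.map_congr_left
      intro x hx
      obtain ⟨y, _, rfl⟩ := List.mem_map.1 (h1.mem_iff.1 hx)
      simp
    generalize σ.map (· - n) = τ at hσ
    subst hσ
    have hp : τ.Perm w := (List.map_perm_map_iff (add_inj' n)).1 h1
    refine ⟨τ, hp, ?_, ?_⟩
    · rw [← h2, pshape_shift n τ (hp.nodup_iff.2 hw)]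
    · intro a d had hb
      rw [← bef_shift n]
      exact h3 _ _ (by omega) ((bef_shift n _ _ _).2 hb)
  · rintro ⟨σ, h1, h2, h3⟩
    refine ⟨σ.map (· + n), h1.map _, ?_, ?_⟩
    · rw [← h2, pshape_shift n σ (h1.nodup_iff.2 hw)]
    · intro a d had hb
      obtain ⟨m1, m2⟩ := bef_mem hb
      obtain ⟨d, _, rfl⟩ := List.mem_map.1 m1
      obtain ⟨a, _, rfl⟩ := List.mem_map.1 m2
      rw [bef_shift] at hb ⊢
      exact h3 a d (by omega) hb

/-! Shuffles and products -/

theorem mem_shuffles (n : ℕ) (u v π : List ℕ) (hu : ∀ x ∈ u, x ≤ n) (hv : ∀ x ∈ v, n < x) :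
    π ∈ shuffles u v ↔ lo n π = u ∧ hi n π = v := by
  have nn : ∀ π : List ℕ, lo n π = [] → hi n π = [] → π = [] := by
    intro π h1 h2
    have := length_split n π
    rw [h1, h2] at this
    exact List.length_eq_zero_iff.1 this.symm
  induction π generalizing u v with
  | nil =>
    cases u with
    | nil => simp only [shuffles, List.mem_singleton]; simp [lo, hi]
    | cons a u =>
      cases v with
      | nil => simp [shuffles, lo, hi]
      | cons b v => simp [shuffles, lo, hi]
  | cons c π ih =>
    by_cases hc : c ≤ n
    · have hc' : ¬ n < c := by omega
      have e1 : lo n (c :: π) = c :: lo n π := by simp [lo, hc]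
      have e2 : hi n (c :: π) = hi n π := by simp [hi, hc']
      rw [e1, e2]
      cases u with
      | nil =>
        simp only [shuffles, List.mem_singleton]
        constructor
        · rintro rfl; exact absurd (hv c (by simp)) hc'
        · rintro ⟨h, _⟩; simp at h
      | cons a u =>
        have ih' := ih u v (fun x hx => hu x (by simp [hx])) hv
        cases v with
        | nil =>
          have : π ∈ shuffles u [] ↔ π = u := by cases u <;> simp [shuffles]
          rw [this] at ih'
          simp only [shuffles, List.mem_singleton, List.cons.injEq, ih']
          tauto
        | cons b v =>
          have hb := hv b (by simp)
          have hbc : b ≠ c := by omega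
          simp only [shuffles, List.mem_append, List.mem_map, List.cons.injEq]
          constructor
          · rintro (⟨y, hy, rfl, rfl⟩ | ⟨y, hy, rfl, rfl⟩)
            · have := ih'.1 hy; tauto
            · exact absurd rfl hbc
          · rintro ⟨⟨rfl, h1⟩, h2⟩
            exact Or.inl ⟨π, ih'.2 ⟨h1, h2⟩, rfl, rfl⟩
    · have hc' : n < c := by omega
      have e1 : lo n (c :: π) = lo n π := by simp [lo, hc]
      have e2 : hi n (c :: π) = c :: hi n π := by simp [hi, hc']
      rw [e1, e2]
      cases v with
      | nil =>
        have : c :: π ∈ shuffles u [] ↔ c :: π = u := by cases u <;> simp [shuffles]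
        rw [this]
        constructor
        · rintro rfl; exact absurd (hu c (by simp)) hc
        · rintro ⟨_, h⟩; simp at h
      | cons b v =>
        have ih' := ih u v hu (fun x hx => hv x (by simp [hx]))
        cases u with
        | nil =>
          have e0 : π ∈ shuffles [] v ↔ π = v := by simp [shuffles]
          have ih2 := e0.symm.trans ih'
          simp only [shuffles, List.mem_singleton, List.cons.injEq]
          rw [ih2]
          tauto
        | cons a u =>
          have ha := hu a (by simp)
          have hac : a ≠ c := by omega
          simp only [shuffles, List.mem_append, List.mem_map, List.cons.injEq]
          constructor
          · rintro (⟨y, hy, rfl, rfl⟩ | ⟨y, hy, rfl, rfl⟩)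
            · exact absurd rfl hac
            · have := ih'.1 hy; tauto
          · rintro ⟨h1, rfl, h2⟩
            exact Or.inr ⟨π, ih'.2 ⟨h1, h2⟩, rfl, rfl⟩

theorem nodup_shuffles (n : ℕ) (u v : List ℕ) (hu : ∀ x ∈ u, x ≤ n) (hv : ∀ x ∈ v, n < x) :
    (shuffles u v).Nodup := by
  induction u generalizing v with
  | nil => simp [shuffles]
  | cons a u ihu =>
    induction v with
    | nil => simp [shuffles]
    | cons b v ihv =>
      have ha := hu a (by simp)
      have hb := hv b (by simp)
      rw [shuffles, List.nodup_append]
      refine ⟨(ihu (b :: v) (fun x hx => hu x (by simp [hx])) hv).map List.cons_injective,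
        (ihv (fun x hx => hv x (by simp [hx]))).map List.cons_injective, ?_⟩
      intro x hx y hy
      obtain ⟨x, _, rfl⟩ := List.mem_map.1 hx
      obtain ⟨y, _, rfl⟩ := List.mem_map.1 hy
      simp only [ne_eq, List.cons.injEq, not_and]
      omega

/-- Sum of the fundamental basis elements over a list. -/
noncomputable def S (l : List (List ℕ)) : FQSym := (l.map fun σ => Finsupp.single σ (1 : ℚ)).sum

theorem S_cons (σ : List ℕ) (l : List (List ℕ)) : S (σ :: l) = Finsupp.single σ 1 + S l := by
  simp [S]

theorem S_append (l l' : List (List ℕ)) : S (l ++ l') = S l + S l' := by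
  simp [S]

theorem S_perm {l l' : List (List ℕ)} (h : l.Perm l') : S l = S l' := (h.map _).sum_eq

theorem sum_single_add (l : List (List ℕ)) (a b : ℚ) :
    (l.map fun π => Finsupp.single π (a + b)).sum =
      (l.map fun π => Finsupp.single π a).sum + (l.map fun π => Finsupp.single π b).sum := by
  induction l with
  | nil => simp
  | cons x l ih => rw [List.map_cons, List.map_cons, List.map_cons, List.sum_cons, List.sum_cons,
      List.sum_cons, ih, Finsupp.single_add]; abel

theorem sum_single_zero (l : List (List ℕ)) :
    (l.map fun π => Finsupp.single π (0 : ℚ)).sum = 0 := by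
  induction l with
  | nil => simp
  | cons x l ih => simp only [List.map_cons, List.sum_cons, ih, Finsupp.single_zero]; simp

theorem fqMul_add_left (x x' y : FQSym) : fqMul (x + x') y = fqMul x y + fqMul x' y := by
  unfold fqMul
  apply Finsupp.sum_add_index'
  · intro σ
    simp [sum_single_zero]
  · intro σ a b
    rw [← Finsupp.sum_add]
    congr 1
    funext ν c
    rw [add_mul, sum_single_add]

theorem fqMul_single (σ : List ℕ) (y : FQSym) : fqMul (Finsupp.single σ 1) y =
    y.sum fun ν b => ((shShuffles σ ν).map fun π => Finsupp.single π b).sum := by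
  unfold fqMul
  rw [Finsupp.sum_single_index]
  · simp
  · simp [sum_single_zero]

theorem fqMul_single_S (σ : List ℕ) (l : List (List ℕ)) :
    fqMul (Finsupp.single σ 1) (S l) = S (l.flatMap fun ν => shShuffles σ ν) := by
  rw [fqMul_single]
  induction l with
  | nil => simp [S]
  | cons ν l ih =>
    rw [S_cons, Finsupp.sum_add_index', ih, Finsupp.sum_single_index, List.flatMap_cons, S_append]
    · rfl
    · exact sum_single_zero _
    · intro ν; exact sum_single_zero _
    · intro ν a b; exact sum_single_add _ a b

theorem fqMul_S (l l' : List (List ℕ)) :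
    fqMul (S l) (S l') = S (l.flatMap fun σ => l'.flatMap fun ν => shShuffles σ ν) := by
  induction l with
  | nil => simp [S, fqMul]
  | cons σ l ih => rw [S_cons, fqMul_add_left, ih, fqMul_single_S, List.flatMap_cons, S_append]

theorem mem_permsOf (n : ℕ) (σ : List ℕ) : σ ∈ permsOf n ↔ IsPerm n σ := by
  rw [permsOf, List.mem_permutations, IsPerm]

theorem nodup_permsOf (n : ℕ) : (permsOf n).Nodup := List.nodup_permutations _ List.nodup_range'

theorem isPerm_mem {n : ℕ} {σ : List ℕ} (h : IsPerm n σ) {x : ℕ} (hx : x ∈ σ) :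
    1 ≤ x ∧ x ≤ n := by
  have := (List.Perm.mem_iff h).1 hx
  rw [List.mem_range'_1] at this
  omega

theorem isPerm_length {n : ℕ} {σ : List ℕ} (h : IsPerm n σ) : σ.length = n := by
  rw [List.Perm.length_eq h, List.length_range']

theorem range'_add (n m : ℕ) :
    List.range' 1 (n + m) = List.range' 1 n ++ (List.range' 1 m).map (· + n) := by
  rw [← List.range'_append_1]
  congr 1
  rw [show (fun x : ℕ => x + n) = (fun x => n + x) by funext x; omega, List.map_add_range']
  congr 1; omega

theorem lo_range (n m : ℕ) : lo n (List.range' 1 (n + m)) = List.range' 1 n := by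
  rw [range'_add, lo, List.filter_append]
  rw [← lo, ← lo, lo_eq_self, lo_eq_nil]
  · simp
  · intro x hx; simp at hx; omega
  · intro x hx; simp at hx; omega

theorem hi_range (n m : ℕ) :
    hi n (List.range' 1 (n + m)) = (List.range' 1 m).map (· + n) := by
  rw [range'_add, hi, List.filter_append]
  rw [← hi, ← hi, hi_eq_nil, hi_eq_self]
  · simp
  · intro x hx; simp at hx; omega
  · intro x hx; simp at hx; omega

theorem isPerm_split {n m : ℕ} {π : List ℕ} (h : IsPerm (n + m) π) :
    IsPerm n (lo n π) ∧ ∃ ν, hi n π = ν.map (· + n) ∧ IsPerm m ν := by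
  have h1 : (lo n π).Perm (lo n (List.range' 1 (n + m))) := List.Perm.filter _ h
  have h2 : (hi n π).Perm (hi n (List.range' 1 (n + m))) := List.Perm.filter _ h
  rw [lo_range] at h1
  rw [hi_range] at h2
  refine ⟨h1, (hi n π).map (· - n), ?_, ?_⟩
  · rw [List.map_map]
    conv_lhs => rw [← List.map_id (hi n π)]
    apply List.map_congr_left
    intro x hx
    have := (List.mem_filter.1 hx).2
    simp at this ⊢; omega
  · have := h2.map (· - n)
    rw [List.map_map] at this
    have e : ((fun x => x - n) ∘ fun x : ℕ => x + n) = id := by funext x; simp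
    rw [e, List.map_id] at this
    exact this

theorem isPerm_join {n m : ℕ} {π ν : List ℕ} (h1 : IsPerm n (lo n π))
    (h2 : hi n π = ν.map (· + n)) (h3 : IsPerm m ν) : IsPerm (n + m) π := by
  refine (lo_append_hi_perm n π).symm.trans ?_
  rw [range'_add, h2]
  exact List.Perm.append h1 (List.Perm.map _ h3)

theorem mul_gen (n m : ℕ) (A B C : List ℕ → Prop)
    (h : ∀ π ν, IsPerm (n + m) π → IsPerm n (lo n π) → hi n π = ν.map (· + n) → IsPerm m ν →
      (C π ↔ A (lo n π) ∧ B ν)) :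
    fqMul (S ((permsOf n).filter fun σ => decide (A σ)))
      (S ((permsOf m).filter fun σ => decide (B σ))) =
      S ((permsOf (n + m)).filter fun σ => decide (C σ)) := by
  rw [fqMul_S]
  apply S_perm
  have key : ∀ σ ν π, IsPerm n σ → IsPerm m ν →
      (π ∈ shShuffles σ ν ↔ lo n π = σ ∧ hi n π = ν.map (· + n)) := by
    intro σ ν π hσ hν
    rw [shShuffles, isPerm_length hσ]
    apply mem_shuffles
    · intro x hx; exact (isPerm_mem hσ hx).2
    · intro x hx
      obtain ⟨y, hy, rfl⟩ := List.mem_map.1 hx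
      have := isPerm_mem hν hy
      omega
  have memf : ∀ k (P : List ℕ → Prop) σ, σ ∈ (permsOf k).filter (fun σ => decide (P σ)) ↔
      IsPerm k σ ∧ P σ := by
    intro k P σ; rw [List.mem_filter, mem_permsOf, decide_eq_true_eq]
  rw [List.perm_ext_iff_of_nodup]
  · intro π
    simp only [List.mem_flatMap, memf]
    constructor
    · rintro ⟨σ, ⟨h1, h2⟩, ν, ⟨h3, h4⟩, h5⟩
      obtain ⟨rfl, h6⟩ := (key σ ν π h1 h3).1 h5
      have hp := isPerm_join h1 h6 h3
      exact ⟨hp, (h π ν hp h1 h6 h3).2 ⟨h2, h4⟩⟩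
    · rintro ⟨hp, hC⟩
      obtain ⟨h1, ν, h2, h3⟩ := isPerm_split hp
      obtain ⟨hA, hB⟩ := (h π ν hp h1 h2 h3).1 hC
      exact ⟨lo n π, ⟨h1, hA⟩, ν, ⟨h3, hB⟩, (key _ _ _ h1 h3).2 ⟨rfl, h2⟩⟩
  · rw [List.nodup_flatMap]
    refine ⟨?_, ?_⟩
    · intro σ hσ
      rw [memf] at hσ
      rw [List.nodup_flatMap]
      refine ⟨?_, ?_⟩
      · intro ν hν
        rw [memf] at hν
        rw [shShuffles, isPerm_length hσ.1]
        apply nodup_shuffles n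
        · intro x hx; exact (isPerm_mem hσ.1 hx).2
        · intro x hx
          obtain ⟨y, hy, rfl⟩ := List.mem_map.1 hx
          have := isPerm_mem hν.1 hy
          omega
      · refine List.Pairwise.imp_of_mem ?_ ((nodup_permsOf m).filter _)
        intro ν ν' hν hν' hne
        rw [memf] at hν hν'
        intro π hπ hπ'
        have e1 := (key σ ν π hσ.1 hν.1).1 hπ
        have e2 := (key σ ν' π hσ.1 hν'.1).1 hπ'
        exact hne (List.map_injective_iff.2 (add_inj' n) (e1.2.symm.trans e2.2))
    · refine List.Pairwise.imp_of_mem ?_ ((nodup_permsOf n).filter _)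
      intro σ σ' hσ hσ' hne
      rw [memf] at hσ hσ'
      intro π hπ hπ'
      obtain ⟨ν, hν, hπ⟩ := List.mem_flatMap.1 hπ
      obtain ⟨ν', hν', hπ'⟩ := List.mem_flatMap.1 hπ'
      rw [memf] at hν hν'
      have e1 := (key σ ν π hσ.1 hν.1).1 hπ
      have e2 := (key σ' ν' π hσ'.1 hν'.1).1 hπ'
      exact hne (e1.1.symm.trans e2.1)
  · exact (nodup_permsOf _).filter _

theorem leB_over {n m : ℕ} {J0 J1 : UBT × UBT} (s1 : sizeU J0.1 = n) (s2 : sizeU J0.2 = n)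
    {π ν : List ℕ} (hp : IsPerm (n + m) π) (h1 : IsPerm n (lo n π))
    (h2 : hi n π = ν.map (· + n)) (h3 : IsPerm m ν) :
    leB (overJ J0 J1) (Pshape π) ↔ leB J0 (Pshape (lo n π)) ∧ leB J1 (Pshape ν) := by
  rw [leB_iff hp, leB_iff h1, leB_iff h3,
    up_over n J0 J1 π (isPerm_nodup hp) (by rw [s1, isPerm_length h1])
      (by rw [s2, isPerm_length h1]), h2, up_shift n J1 ν (isPerm_nodup h3)]

theorem isPerm_reverse {n : ℕ} {σ : List ℕ} (h : IsPerm n σ) : IsPerm n σ.reverse :=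
  (List.reverse_perm σ).trans h

theorem permutoLe_reverse {σ ν : List ℕ} (h : PermutoLe σ ν) :
    PermutoLe ν.reverse σ.reverse := by
  induction h with
  | refl => exact .refl
  | tail _ h ih =>
    refine Relation.ReflTransGen.head ?_ ih
    obtain ⟨p, s, a, b, hab, rfl, rfl⟩ := h
    exact ⟨s.reverse, p.reverse, a, b, hab, by simp, by simp⟩

theorem leB_swap {J K : UBT × UBT} (h : leB J K) : leB K.swap J.swap := by
  obtain ⟨n, σ0, σ1, h0, h1, rfl, rfl, hle⟩ := h
  exact ⟨n, σ1.reverse, σ0.reverse, isPerm_reverse h1, isPerm_reverse h0,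
    pshape_reverse (isPerm_nodup h1), pshape_reverse (isPerm_nodup h0), permutoLe_reverse hle⟩

theorem leB_swap_iff {n : ℕ} {π : List ℕ} (h : IsPerm n π) (J : UBT × UBT) :
    leB (Pshape π) J ↔ leB J.swap (Pshape π.reverse) := by
  rw [pshape_reverse (isPerm_nodup h)]
  exact ⟨leB_swap, fun h => by simpa using leB_swap h⟩

end Bx

/-- the elementary and homogeneous bases of Baxter are
multiplicative: `E_{J0} · E_{J1} = E_{J0 / J1}` and
`H_{J0} · H_{J1} = H_{J0 \ J1}`. -/
theorem multiplicative_bases (n m : ℕ) (J0 J1 : UBT × UBT)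
    (h0 : IsTwin J0) (h1 : IsTwin J1)
    (hn : sizeU J0.1 = n) (hm : sizeU J1.1 = m) :
    fqMul (EJ n J0) (EJ m J1) = EJ (n + m) (overJ J0 J1) ∧
    fqMul (HJ n J0) (HJ m J1) = HJ (n + m) (underJ J0 J1) := by
  have s2 : sizeU J0.2 = n := by rw [← h0.1, hn]
  constructor
  · exact Bx.mul_gen n m _ _ _ fun π ν hp h1 h2 h3 => Bx.leB_over hn s2 hp h1 h2 h3
  · refine Bx.mul_gen n m _ _ _ fun π ν hp h1 h2 h3 => ?_
    have e1 : Bx.lo n π.reverse = (Bx.lo n π).reverse := List.filter_reverse ..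
    have e2 : Bx.hi n π.reverse = ν.reverse.map (· + n) := by
      rw [List.map_reverse, ← h2]; exact List.filter_reverse ..
    rw [Bx.leB_swap_iff hp, Bx.leB_swap_iff h1, Bx.leB_swap_iff h3, ← e1]
    exact Bx.leB_over (J0 := J0.swap) (J1 := J1.swap) s2 hn (Bx.isPerm_reverse hp)
      (by rw [e1]; exact Bx.isPerm_reverse h1) e2 (Bx.isPerm_reverse h3)
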